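/- arXiv:1601.06391 — 5 statements merged into one kernel-verified Lean document; each statement's English description precedes it below -/
import Mathlib

section
/- Let F be a finite field with q elements, b ∈ ℕ, and let M be a b × ℕ matrix over F of rank b, with pivot set {p_1 < p_2 < ... < p_b}. For c ∈ F^b let [c M] denote the b × ℕ matrix whose column 0 is c and whose column j+1 is column j of M. Then: (1) the set of c ∈ F^b for which the pivot set of [c M] equals {p+1 : p in the pivot set of M} is exactly {0}, so it has 1 element; and (2) for each j with 1 ≤ j ≤ b, the set of c ∈ F^b for which the pivot set of [c M] equals {0} ∪ {p+1 : p in the pivot set of M, p ≠ p_j} is exactly the set of vectors lying in the span of columns p_1, ..., p_j of M but not in the span of columns p_1, ..., p_{j−1}, and it has exactly q^j − q^{j−1} elements. -/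
open Matrix

/-- The pivot set of a matrix with columns indexed by `ℕ`: column `j` is pivotal
if it does not lie in the linear span of the columns with index strictly less than `j`. -/
def pivotSet {F : Type*} [Field F] {b : ℕ} (M : Matrix (Fin b) ℕ F) : Set ℕ :=
  {j | Mᵀ j ∉ Submodule.span F (Mᵀ '' Set.Iio j)}

/-- The matrix `[c M]` whose column `0` is `c` and whose column `j+1` is column `j` of `M`. -/
def prependCol {F : Type*} [Field F] {b : ℕ} (c : Fin b → F) (M : Matrix (Fin b) ℕ F) :
    Matrix (Fin b) ℕ F :=
  Matrix.of fun i j => match j with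
    | 0 => c i
    | j + 1 => M i j

section Aux
variable {F : Type*} [Field F] {b : ℕ}

/-- span of the columns before `n` -/
def colSpan (M : Matrix (Fin b) ℕ F) (n : ℕ) : Submodule F (Fin b → F) :=
  Submodule.span F (Mᵀ '' Set.Iio n)

theorem colSpan_zero (M : Matrix (Fin b) ℕ F) : colSpan M 0 = ⊥ := by
  have h : (Set.image (fun n => Mᵀ n) (Set.Iio 0)) = ∅ := by simp
  exact (congrArg (Submodule.span F) h).trans Submodule.span_empty

theorem colSpan_mono (M : Matrix (Fin b) ℕ F) : Monotone (colSpan M) := by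
  intro m n h
  exact Submodule.span_mono (Set.image_mono (Set.Iio_subset_Iio h))

theorem Iio_succ_insert (n : ℕ) : Set.Iio (n + 1) = insert n (Set.Iio n) := by
  ext x
  simp only [Set.mem_Iio, Set.mem_insert_iff]
  omega

theorem mem_colSpan_succ (M : Matrix (Fin b) ℕ F) (n : ℕ) (x : Fin b → F) :
    x ∈ colSpan M (n + 1) ↔ ∃ a : F, ∃ w ∈ colSpan M n, x = a • Mᵀ n + w := by
  have h : (Set.image (fun n => Mᵀ n) (Set.Iio (n + 1))) =
      insert (Mᵀ n) (Set.image (fun n => Mᵀ n) (Set.Iio n)) := by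
    rw [Iio_succ_insert, Set.image_insert_eq]
  have h' : colSpan M (n + 1) = Submodule.span F
      (insert (Mᵀ n) (Set.image (fun n => Mᵀ n) (Set.Iio n))) :=
    congrArg (Submodule.span F) h
  rw [h', Submodule.mem_span_insert]
  rfl

theorem mem_pivot (M : Matrix (Fin b) ℕ F) (n : ℕ) :
    n ∈ pivotSet M ↔ Mᵀ n ∉ colSpan M n := Iff.rfl

theorem zero_mem_pivot_prepend (c : Fin b → F) (M : Matrix (Fin b) ℕ F) :
    0 ∈ pivotSet (prependCol c M) ↔ c ≠ 0 := by
  rw [mem_pivot, colSpan_zero, Submodule.mem_bot]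
  rfl

theorem succ_mem_pivot_prepend (c : Fin b → F) (M : Matrix (Fin b) ℕ F) (k : ℕ) :
    k + 1 ∈ pivotSet (prependCol c M) ↔ ¬ ∃ a : F, ∃ w ∈ colSpan M k, Mᵀ k = a • c + w := by
  have h : (prependCol c M)ᵀ '' Set.Iio (k + 1) = insert c (Mᵀ '' Set.Iio k) := by
    ext x
    constructor
    · rintro ⟨i, hi, rfl⟩
      cases i with
      | zero => left; rfl
      | succ i => right; exact ⟨i, Nat.lt_of_succ_lt_succ hi, rfl⟩
    · rintro (rfl | ⟨i, hi, rfl⟩)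
      · exact ⟨0, Nat.succ_pos k, rfl⟩
      · exact ⟨i + 1, Nat.succ_lt_succ hi, rfl⟩
  rw [mem_pivot, colSpan, h, Submodule.mem_span_insert]
  rfl

theorem colSpan_succ_of_not_pivot (M : Matrix (Fin b) ℕ F) (n : ℕ) (h : n ∉ pivotSet M) :
    colSpan M (n + 1) = colSpan M n := by
  rw [mem_pivot, not_not] at h
  apply le_antisymm _ (colSpan_mono M (Nat.le_succ n))
  intro x hx
  obtain ⟨a, w, hw, rfl⟩ := (mem_colSpan_succ M n x).1 hx
  exact add_mem (Submodule.smul_mem _ _ h) hw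

theorem pivot_of_jump (M : Matrix (Fin b) ℕ F) (m : ℕ) (c : Fin b → F)
    (h1 : c ∈ colSpan M (m + 1)) (h2 : c ∉ colSpan M m) : m ∈ pivotSet M := by
  by_contra h
  rw [colSpan_succ_of_not_pivot M m h] at h1
  exact h2 h1

theorem exists_jump (M : Matrix (Fin b) ℕ F) (n : ℕ) (c : Fin b → F) (hc : c ≠ 0)
    (h : c ∈ colSpan M n) : ∃ m, c ∈ colSpan M (m + 1) ∧ c ∉ colSpan M m := by
  induction n with
  | zero => rw [colSpan_zero, Submodule.mem_bot] at h; exact absurd h hc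
  | succ n ih =>
    by_cases h' : c ∈ colSpan M n
    · exact ih h'
    · exact ⟨n, h, h'⟩

theorem pivot_prepend (M : Matrix (Fin b) ℕ F) (m : ℕ) (c : Fin b → F)
    (h1 : c ∈ colSpan M (m + 1)) (h2 : c ∉ colSpan M m) :
    pivotSet (prependCol c M) = insert 0 ((· + 1) '' (pivotSet M \ {m})) := by
  ext k
  cases k with
  | zero =>
    rw [zero_mem_pivot_prepend]
    have : c ≠ 0 := by rintro rfl; exact h2 (zero_mem _)
    simp [this]
  | succ k =>
    rw [succ_mem_pivot_prepend]
    have : k + 1 ∈ (insert 0 ((· + 1) '' (pivotSet M \ {m})) : Set ℕ) ↔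
        (Mᵀ k ∉ colSpan M k ∧ k ≠ m) := by
      simp [mem_pivot]
    rw [this]
    rcases lt_trichotomy k m with hk | rfl | hk
    · refine (not_congr ?_).trans (and_iff_left hk.ne).symm
      constructor
      · rintro ⟨a, w, hw, e⟩
        by_cases ha : a = 0
        · rw [e, ha, zero_smul, zero_add]; exact hw
        · exfalso
          apply h2
          apply colSpan_mono M (show k + 1 ≤ m from hk)
          rw [mem_colSpan_succ]
          refine ⟨a⁻¹, -(a⁻¹ • w), neg_mem (Submodule.smul_mem _ _ hw), ?_⟩
          rw [e, smul_add, smul_smul, inv_mul_cancel₀ ha, one_smul]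
          abel
      · intro h
        exact ⟨0, _, h, by simp⟩
    · simp only [ne_eq, not_true_eq_false, and_false, iff_false, not_not]
      obtain ⟨a, w, hw, e⟩ := (mem_colSpan_succ M k c).1 h1
      have ha : a ≠ 0 := by
        rintro rfl
        apply h2
        rw [e, zero_smul, zero_add]; exact hw
      refine ⟨a⁻¹, -(a⁻¹ • w), neg_mem (Submodule.smul_mem _ _ hw), ?_⟩
      rw [e, smul_add, smul_smul, inv_mul_cancel₀ ha, one_smul]
      abel
    · refine (not_congr ?_).trans (and_iff_left hk.ne').symm
      constructor
      · rintro ⟨a, w, hw, e⟩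
        rw [e]
        exact add_mem (Submodule.smul_mem _ _ (colSpan_mono M (show m + 1 ≤ k from hk) h1)) hw
      · intro h
        exact ⟨0, _, h, by simp⟩

theorem colSpan_eq (M : Matrix (Fin b) ℕ F) (p : Fin b → ℕ) (hrange : Set.range p = pivotSet M)
    (n : ℕ) : colSpan M n = Submodule.span F ((fun i => Mᵀ (p i)) '' {i | p i < n}) := by
  apply le_antisymm
  · induction n with
    | zero => rw [colSpan_zero]; exact bot_le
    | succ n ih =>
      have ih' := ih.trans (Submodule.span_mono (Set.image_mono
        (show {i | p i < n} ⊆ {i | p i < n + 1} from fun i hi => Nat.lt_succ_of_lt hi)))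
      by_cases h : n ∈ pivotSet M
      · intro x hx
        obtain ⟨a, w, hw, rfl⟩ := (mem_colSpan_succ M n x).1 hx
        refine add_mem (Submodule.smul_mem _ _ ?_) (ih' hw)
        rw [← hrange] at h
        obtain ⟨i, rfl⟩ := h
        exact Submodule.subset_span ⟨i, Nat.lt_succ_self _, rfl⟩
      · rw [colSpan_succ_of_not_pivot M n h]
        exact ih'
  · apply Submodule.span_mono
    rintro _ ⟨i, hi, rfl⟩
    exact ⟨p i, hi, rfl⟩

theorem exists_mem_colSpan (M : Matrix (Fin b) ℕ F)
    (hM : Submodule.span F (Set.range Mᵀ) = ⊤) (c : Fin b → F) : ∃ n, c ∈ colSpan M n := by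
  have hc : c ∈ Submodule.span F (Set.range Mᵀ) := by rw [hM]; trivial
  induction hc using Submodule.span_induction with
  | mem x hx =>
    obtain ⟨i, rfl⟩ := hx
    exact ⟨i + 1, Submodule.subset_span ⟨i, Nat.lt_succ_self i, rfl⟩⟩
  | zero => exact ⟨0, zero_mem _⟩
  | add x y _ _ hx hy =>
    obtain ⟨m, hm⟩ := hx
    obtain ⟨n, hn⟩ := hy
    exact ⟨max m n, add_mem (colSpan_mono M (le_max_left _ _) hm)
      (colSpan_mono M (le_max_right _ _) hn)⟩
  | smul a x _ hx =>
    obtain ⟨m, hm⟩ := hx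
    exact ⟨m, Submodule.smul_mem _ _ hm⟩

theorem linInd_pivots (M : Matrix (Fin b) ℕ F)
    (hM : Submodule.span F (Set.range Mᵀ) = ⊤)
    (p : Fin b → ℕ) (hrange : Set.range p = pivotSet M) :
    LinearIndependent F (fun i => Mᵀ (p i)) := by
  apply linearIndependent_of_top_le_span_of_card_eq_finrank
  · intro c _
    obtain ⟨n, hn⟩ := exists_mem_colSpan M hM c
    rw [colSpan_eq M p hrange] at hn
    exact Submodule.span_mono (Set.image_subset_range _ _) hn
  · simp

theorem ncard_span [Fintype F] {v : Fin b → (Fin b → F)} (hv : LinearIndependent F v)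
    (s : Set (Fin b)) :
    (↑(Submodule.span F (v '' s)) : Set (Fin b → F)).ncard = Fintype.card F ^ s.ncard := by
  classical
  have h1 := Module.natCard_eq_pow_finrank (K := F) (V := Submodule.span F (v '' s))
  have h2 := finrank_span_eq_card (hv.comp (Subtype.val : s → Fin b) Subtype.val_injective)
  have h3 : Set.range (v ∘ (Subtype.val : s → Fin b)) = v '' s := by
    rw [Set.range_comp, Subtype.range_coe]
  rw [h3, ← Nat.card_eq_fintype_card, Nat.card_coe_set_eq] at h2
  rw [h2, Nat.card_eq_fintype_card (α := F)] at h1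
  exact h1

end Aux

theorem stmt1 {F : Type*} [Field F] [Fintype F] {q b : ℕ} (hq : Fintype.card F = q)
    (M : Matrix (Fin b) ℕ F)
    (hM : Submodule.span F (Set.range Mᵀ) = ⊤)
    (p : Fin b → ℕ) (hp : StrictMono p) (hrange : Set.range p = pivotSet M) :
    ({c : Fin b → F | pivotSet (prependCol c M) = (· + 1) '' pivotSet M} = {0} ∧
      ({c : Fin b → F | pivotSet (prependCol c M) = (· + 1) '' pivotSet M}).ncard = 1) ∧
    ∀ j : Fin b,
      ({c : Fin b → F | pivotSet (prependCol c M) =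
          insert 0 ((· + 1) '' (pivotSet M \ {p j}))} =
        (↑(Submodule.span F ((fun i => Mᵀ (p i)) '' {i : Fin b | i ≤ j})) \
          ↑(Submodule.span F ((fun i => Mᵀ (p i)) '' {i : Fin b | i < j})) : Set (Fin b → F))) ∧
      ({c : Fin b → F | pivotSet (prependCol c M) =
          insert 0 ((· + 1) '' (pivotSet M \ {p j}))}).ncard =
        q ^ ((j : ℕ) + 1) - q ^ (j : ℕ) := by
  have key : ∀ j : Fin b, {c : Fin b → F | pivotSet (prependCol c M) =
          insert 0 ((· + 1) '' (pivotSet M \ {p j}))} =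
        (↑(Submodule.span F ((fun i => Mᵀ (p i)) '' {i : Fin b | i ≤ j})) \
          ↑(Submodule.span F ((fun i => Mᵀ (p i)) '' {i : Fin b | i < j})) : Set (Fin b → F)) := by
    intro j
    have e1 : {i : Fin b | i ≤ j} = {i | p i < p j + 1} := by
      ext i; simp [Nat.lt_succ_iff, hp.le_iff_le]
    have e2 : {i : Fin b | i < j} = {i | p i < p j} := by
      ext i; simp [hp.lt_iff_lt]
    rw [e1, e2, ← colSpan_eq M p hrange, ← colSpan_eq M p hrange]
    ext c
    constructor
    · intro hc
      rw [Set.mem_ofPred_eq] at hc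
      have hc0 : c ≠ 0 := by
        rw [← zero_mem_pivot_prepend c M, hc]
        exact Set.mem_insert _ _
      obtain ⟨n, hn⟩ := exists_mem_colSpan M hM c
      obtain ⟨m, hm1, hm2⟩ := exists_jump M n c hc0 hn
      have hmp := pivot_of_jump M m c hm1 hm2
      rw [pivot_prepend M m c hm1 hm2] at hc
      have hmj : m = p j := by
        by_contra hne
        have : m + 1 ∈ (insert 0 ((· + 1) '' (pivotSet M \ {m})) : Set ℕ) := by
          rw [hc]
          exact Or.inr ⟨m, ⟨hmp, hne⟩, rfl⟩
        simp at this
      subst hmj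
      exact ⟨hm1, hm2⟩
    · rintro ⟨h1, h2⟩
      exact pivot_prepend M (p j) c h1 h2
  have key1 : {c : Fin b → F | pivotSet (prependCol c M) = (· + 1) '' pivotSet M} = {0} := by
    ext c
    rw [Set.mem_ofPred_eq, Set.mem_singleton_iff]
    constructor
    · intro h
      by_contra hc
      rw [← ne_eq, ← zero_mem_pivot_prepend c M, h] at hc
      simp at hc
    · rintro rfl
      ext k
      cases k with
      | zero => rw [zero_mem_pivot_prepend]; simp
      | succ k => rw [succ_mem_pivot_prepend]; simp [mem_pivot]
  refine ⟨⟨key1, by rw [key1, Set.ncard_singleton]⟩, fun j => ⟨key j, ?_⟩⟩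
  have hli := linInd_pivots M hM p hrange
  rw [key j, Set.ncard_sdiff, ncard_span hli, ncard_span hli, hq]
  · have e1 : {i : Fin b | i ≤ j}.ncard = (j : ℕ) + 1 := by
      rw [show {i : Fin b | i ≤ j} = ↑(Finset.Iic j) by ext; simp, Set.ncard_coe_finset,
        Fin.card_Iic]
    have e2 : {i : Fin b | i < j}.ncard = (j : ℕ) := by
      rw [show {i : Fin b | i < j} = ↑(Finset.Iio j) by ext; simp, Set.ncard_coe_finset,
        Fin.card_Iio]
    rw [e1, e2]
  · exact Submodule.span_mono (Set.image_mono fun i (hi : i < j) => (show i ≤ j from le_of_lt hi))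
end

section
/- Let F be a finite field with q elements, b ≤ N natural numbers, and let τ be a b-element subset of {0, 1, ..., N−1}. Then the number of b × N matrices M over F whose pivot set equals τ is |GL_b(F)| · q^{b(N−b) − ℓ(τ)}, where ℓ(τ) = #{(i,j) : i < j, j ∈ τ, i ∉ τ} (note ℓ(τ) ≤ b(N−b), so the exponent is a natural number). In particular the fraction of all b × N matrices with pivot set τ is (|GL_b(F)|/q^{b²}) · q^{−ℓ(τ)}, independent of N. -/
open Matrix

/-- The pivot set of a `b × N` matrix: column `j` is pivotal if it does not lie in the
linear span of the columns with index strictly less than `j`. -/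
def pivotSetFin {F : Type*} [Field F] {b N : ℕ} (M : Matrix (Fin b) (Fin N) F) : Set (Fin N) :=
  {j | Mᵀ j ∉ Submodule.span F (Mᵀ '' Set.Iio j)}

/-- The inversion number of a juggling state `τ ⊆ {0,...,N-1}`:
the number of pairs `(i,j)` with `i < j`, `j ∈ τ`, `i ∉ τ`. -/
def invNumFin {N : ℕ} (τ : Finset (Fin N)) : ℕ :=
  ((Finset.univ : Finset (Fin N × Fin N)).filter
    fun p => p.1 < p.2 ∧ p.2 ∈ τ ∧ p.1 ∉ τ).card

section Aux

variable {F V : Type*} [Field F] [AddCommGroup V] [Module F V]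

/-- The tuple `v` has pivots exactly at the indices satisfying `T`. -/
def PV (F : Type*) {V : Type*} [Field F] [AddCommGroup V] [Module F V]
    (T : ℕ → Prop) (n : ℕ) (v : Fin n → V) : Prop :=
  ∀ j : Fin n, v j ∉ Submodule.span F (v '' Set.Iio j) ↔ T j

theorem snoc_image_castSucc {n : ℕ} (v : Fin n → V) (x : V) (j : Fin n) :
    (Fin.snoc v x : Fin (n+1) → V) '' Set.Iio j.castSucc = v '' Set.Iio j := by
  ext y
  constructor
  · rintro ⟨i, hi, rfl⟩
    induction i using Fin.lastCases with
    | last => exact absurd hi (by simp [Fin.le_last])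
    | cast i => exact ⟨i, by simpa using hi, by simp⟩
  · rintro ⟨i, hi, rfl⟩
    exact ⟨i.castSucc, by simpa using hi, by simp⟩

theorem snoc_image_last {n : ℕ} (v : Fin n → V) (x : V) :
    (Fin.snoc v x : Fin (n+1) → V) '' Set.Iio (Fin.last n) = Set.range v := by
  ext y
  constructor
  · rintro ⟨i, hi, rfl⟩
    induction i using Fin.lastCases with
    | last => exact absurd hi (by simp)
    | cast i => exact ⟨i, by simp⟩
  · rintro ⟨i, rfl⟩
    exact ⟨i.castSucc, by simp [Fin.castSucc_lt_last], by simp⟩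

theorem PV_snoc (T : ℕ → Prop) {n : ℕ} (v : Fin n → V) (x : V) :
    PV F T (n+1) (Fin.snoc v x : Fin (n+1) → V) ↔
      PV F T n v ∧ (x ∉ Submodule.span F (Set.range v) ↔ T n) := by
  unfold PV
  rw [Fin.forall_fin_succ']
  simp only [snoc_image_castSucc, snoc_image_last, Fin.snoc_castSucc, Fin.snoc_last,
    Fin.val_castSucc, Fin.val_last]

theorem finrank_insert_of_notMem [FiniteDimensional F V] (s : Set V) (x : V)
    (h : x ∉ Submodule.span F s) :
    Module.finrank F (Submodule.span F (insert x s)) =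
      Module.finrank F (Submodule.span F s) + 1 := by
  have hx : x ≠ 0 := by
    rintro rfl
    exact h (Submodule.zero_mem _)
  have hd : Submodule.span F {x} ⊓ Submodule.span F s = ⊥ := by
    rw [← disjoint_iff, disjoint_comm]
    exact (Submodule.disjoint_span_singleton' hx).2 h
  have := Submodule.finrank_sup_add_finrank_inf_eq (Submodule.span F {x}) (Submodule.span F s)
  rw [hd, finrank_bot, finrank_span_singleton hx] at this
  rw [Submodule.span_insert]
  omega

theorem PV_finrank [FiniteDimensional F V] (T : ℕ → Prop) [DecidablePred T] (n : ℕ)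
    (v : Fin n → V) (hv : PV F T n v) :
    Module.finrank F (Submodule.span F (Set.range v)) = Nat.count T n := by
  induction n with
  | zero => simp [Set.range_eq_empty]
  | succ n ih =>
    obtain ⟨w, x, rfl⟩ : ∃ (w : Fin n → V) (x : V), v = Fin.snoc w x :=
      ⟨Fin.init v, v (Fin.last n), (Fin.snoc_init_self v).symm⟩
    rw [PV_snoc] at hv
    have h1 := ih w hv.1
    rw [Fin.range_snoc, Nat.count_succ]
    by_cases hT : T n
    · rw [finrank_insert_of_notMem _ _ (hv.2.2 hT), h1, if_pos hT]
    · have hx : x ∈ Submodule.span F (Set.range w) := by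
        by_contra h
        exact hT (hv.2.1 h)
      rw [Submodule.span_insert_eq_span hx, h1, if_neg hT, add_zero]

/-- Splitting off the last vector. -/
def PVequiv (T : ℕ → Prop) (n : ℕ) :
    {v : Fin (n+1) → V // PV F T (n+1) v} ≃
      (Σ v : {v : Fin n → V // PV F T n v},
        {x : V // x ∉ Submodule.span F (Set.range v.1) ↔ T n}) where
  toFun v :=
    have h : PV F T n (Fin.init v.1) ∧
        (v.1 (Fin.last n) ∉ Submodule.span F (Set.range (Fin.init v.1)) ↔ T n) := by
      rw [← PV_snoc, Fin.snoc_init_self]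
      exact v.2
    ⟨⟨Fin.init v.1, h.1⟩, ⟨v.1 (Fin.last n), h.2⟩⟩
  invFun p := ⟨Fin.snoc p.1.1 p.2.1, (PV_snoc T _ _).2 ⟨p.1.2, p.2.2⟩⟩
  left_inv v := by
    apply Subtype.ext
    exact Fin.snoc_init_self v.1
  right_inv p := by
    obtain ⟨⟨v, hv⟩, ⟨x, hx⟩⟩ := p
    refine Sigma.subtype_ext ?_ ?_
    · apply Subtype.ext
      simp [Fin.init_snoc]
    · simp

theorem card_PV [Fintype F] [Finite V] (T : ℕ → Prop) [DecidablePred T] (n : ℕ) :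
    Nat.card {v : Fin n → V // PV F T n v} =
      (∏ i : Fin (Nat.count T n),
        (Fintype.card F ^ Module.finrank F V - Fintype.card F ^ (i : ℕ))) *
      Fintype.card F ^ (∑ i ∈ Finset.range n, if T i then 0 else Nat.count T i) := by
  induction n with
  | zero =>
    have : Unique {v : Fin 0 → V // PV F T 0 v} :=
      { default := ⟨Fin.elim0, fun j => j.elim0⟩
        uniq := fun a => Subtype.ext (Subsingleton.elim _ _) }
    rw [Nat.card_unique, Finset.range_zero, Finset.sum_empty, pow_zero, mul_one]
    exact Fin.prod_univ_zero _ |>.symm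
  | succ n ih =>
    have := Fintype.ofFinite {v : Fin n → V // PV F T n v}
    have hspan (v : {v : Fin n → V // PV F T n v}) :
        Nat.card (Submodule.span F (Set.range v.1)) = Fintype.card F ^ Nat.count T n := by
      rw [Module.natCard_eq_pow_finrank (K := F), PV_finrank T n v.1 v.2,
        Nat.card_eq_fintype_card]
    have hV : Nat.card V = Fintype.card F ^ Module.finrank F V := by
      rw [Module.natCard_eq_pow_finrank (K := F), Nat.card_eq_fintype_card]
    rw [Nat.card_congr (PVequiv T n), Nat.card_sigma, Finset.sum_range_succ]
    by_cases hT : T n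
    · have hf (v : {v : Fin n → V // PV F T n v}) :
          Nat.card {x : V // x ∉ Submodule.span F (Set.range v.1) ↔ T n} =
            Fintype.card F ^ Module.finrank F V - Fintype.card F ^ Nat.count T n := by
        rw [← hspan v, ← hV]
        simp only [hT, iff_true]
        have := Set.ncard_add_ncard_compl (Submodule.span F (Set.range v.1) : Set V)
        have h2 : Nat.card {x : V // x ∉ Submodule.span F (Set.range v.1)} =
          (Submodule.span F (Set.range v.1) : Set V)ᶜ.ncard := rfl
        have h3 : Nat.card (Submodule.span F (Set.range v.1)) =
          (Submodule.span F (Set.range v.1) : Set V).ncard := rfl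
        omega
      have hc : Nat.count T (n+1) = Nat.count T n + 1 := by simp [Nat.count_succ, hT]
      rw [Finset.sum_congr rfl (fun v _ => hf v), Finset.sum_const, Finset.card_univ,
        ← Nat.card_eq_fintype_card, ih, hc, Fin.prod_univ_castSucc]
      simp only [hT, if_true, smul_eq_mul, Fin.val_castSucc, Fin.val_last, add_zero]
      ring
    · have hf (v : {v : Fin n → V // PV F T n v}) :
          Nat.card {x : V // x ∉ Submodule.span F (Set.range v.1) ↔ T n} =
            Fintype.card F ^ Nat.count T n := by
        rw [← hspan v]
        simp only [hT, iff_false, not_not]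
      have hc : Nat.count T (n+1) = Nat.count T n := by simp [Nat.count_succ, hT]
      rw [Finset.sum_congr rfl (fun v _ => hf v), Finset.sum_const, Finset.card_univ,
        ← Nat.card_eq_fintype_card, ih, hc]
      simp only [hT, if_false, smul_eq_mul, pow_add, mul_assoc]

end Aux

theorem count_eq_card {N : ℕ} (τ : Finset (Fin N))
    [DecidablePred fun k => ∃ h : k < N, (⟨k, h⟩ : Fin N) ∈ τ] (n : ℕ) :
    Nat.count (fun k => ∃ h : k < N, (⟨k, h⟩ : Fin N) ∈ τ) n =
      (τ.filter fun j : Fin N => (j : ℕ) < n).card := by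
  rw [Nat.count_eq_card_filter_range, ← Finset.card_map Fin.valEmbedding]
  congr 1
  ext k
  simp only [Finset.mem_filter, Finset.mem_range, Finset.mem_map, Fin.valEmbedding_apply]
  constructor
  · rintro ⟨hk, h, hm⟩
    exact ⟨⟨k, h⟩, ⟨hm, hk⟩, rfl⟩
  · rintro ⟨j, ⟨hm, hk⟩, rfl⟩
    exact ⟨hk, j.2, hm⟩

theorem inv_eq_sum {N : ℕ} (τ : Finset (Fin N)) :
    invNumFin τ = ∑ i ∈ τᶜ, (τ.filter fun j => i < j).card := by
  unfold invNumFin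
  rw [← Finset.card_sigma]
  refine Finset.card_bij' (fun p _ => ⟨p.1, p.2⟩) (fun p _ => (p.1, p.2)) ?_ ?_ ?_ ?_
  · simp only [Finset.mem_filter, Finset.mem_sigma, Finset.mem_compl]; tauto
  · simp only [Finset.mem_filter, Finset.mem_sigma, Finset.mem_compl]
    simp; tauto
  · simp
  · simp

theorem exp_add_inv {N : ℕ} (τ : Finset (Fin N))
    [DecidablePred fun k => ∃ h : k < N, (⟨k, h⟩ : Fin N) ∈ τ] :
    (∑ i ∈ Finset.range N, if (∃ h : i < N, (⟨i, h⟩ : Fin N) ∈ τ) then 0 else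
      Nat.count (fun k => ∃ h : k < N, (⟨k, h⟩ : Fin N) ∈ τ) i) + invNumFin τ =
      τ.card * (N - τ.card) := by
  rw [inv_eq_sum, Finset.sum_range]
  have h1 : (∑ i : Fin N, if (∃ h : (i : ℕ) < N, (⟨i, h⟩ : Fin N) ∈ τ) then 0 else
      Nat.count (fun k => ∃ h : k < N, (⟨k, h⟩ : Fin N) ∈ τ) i) =
      ∑ i ∈ τᶜ, (τ.filter fun j => j < i).card := by
    rw [← Finset.sum_filter_add_sum_filter_not Finset.univ (fun i => i ∈ τᶜ)]
    rw [Finset.sum_eq_zero (s := Finset.univ.filter fun i => ¬ i ∈ τᶜ), add_zero]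
    · apply Finset.sum_congr
      · ext; simp
      · intro i hi
        have hi' : i ∉ τ := by simpa using hi
        rw [if_neg (by simpa using hi'), count_eq_card]
        rfl
    · intro i hi
      have hi' : i ∈ τ := by simpa using hi
      rw [if_pos ⟨i.2, hi'⟩]
  rw [h1, ← Finset.sum_add_distrib]
  have h2 : ∀ i ∈ τᶜ, (τ.filter fun j => j < i).card + (τ.filter fun j => i < j).card = τ.card := by
    intro i hi
    rw [← Finset.card_filter_add_card_filter_not (s := τ) (fun j => j < i)]
    congr 2
    apply Finset.filter_congr
    intro j hj
    have : j ≠ i := by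
      rintro rfl
      exact (Finset.mem_compl.1 hi) hj
    rw [not_lt]
    exact ⟨le_of_lt, fun h => lt_of_le_of_ne h this.symm⟩
  rw [Finset.sum_congr rfl h2, Finset.sum_const, Finset.card_compl, Fintype.card_fin, smul_eq_mul,
    mul_comm]

theorem stmt2 {F : Type*} [Field F] [Fintype F] {q b N : ℕ} (hq : Fintype.card F = q)
    (hbN : b ≤ N) (τ : Finset (Fin N)) (hτ : τ.card = b) :
    invNumFin τ ≤ b * (N - b) ∧
    Nat.card {M : Matrix (Fin b) (Fin N) F // pivotSetFin M = ↑τ} =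
      Nat.card (GL (Fin b) F) * q ^ (b * (N - b) - invNumFin τ) ∧
    (Nat.card {M : Matrix (Fin b) (Fin N) F // pivotSetFin M = ↑τ} : ℝ) / q ^ (b * N) =
      (Nat.card (GL (Fin b) F) : ℝ) / q ^ (b ^ 2) * ((q : ℝ) ^ invNumFin τ)⁻¹ := by
  classical
  have hE := exp_add_inv τ
  rw [hτ] at hE
  have hle : invNumFin τ ≤ b * (N - b) := by omega
  have hcard : Nat.card {M : Matrix (Fin b) (Fin N) F // pivotSetFin M = ↑τ} =
      Nat.card (GL (Fin b) F) * q ^ (b * (N - b) - invNumFin τ) := by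
    have e : {M : Matrix (Fin b) (Fin N) F // pivotSetFin M = ↑τ} ≃
        {v : Fin N → (Fin b → F) //
          PV F (fun k => ∃ h : k < N, (⟨k, h⟩ : Fin N) ∈ τ) N v} := by
      refine Equiv.subtypeEquiv
        ⟨fun M => Mᵀ, fun v => (Matrix.of v)ᵀ, fun _ => rfl, fun _ => rfl⟩ ?_
      intro M
      simp only [pivotSetFin, PV, Set.ext_iff, Set.mem_setOf_eq, Finset.mem_coe, Equiv.coe_fn_mk]
      refine forall_congr' fun j => iff_congr Iff.rfl ?_
      exact ⟨fun h => ⟨j.2, h⟩, fun ⟨_, h⟩ => h⟩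
    have hcnt : Nat.count (fun k => ∃ h : k < N, (⟨k, h⟩ : Fin N) ∈ τ) N = b := by
      rw [count_eq_card, ← hτ]
      congr 1
      exact Finset.filter_true_of_mem fun j _ => j.2
    rw [Nat.card_congr e, card_PV, hcnt, Matrix.card_GL_field, Module.finrank_fintype_fun_eq_card,
      Fintype.card_fin, hq, ← hE, Nat.add_sub_cancel]
  refine ⟨hle, hcard, ?_⟩
  rw [hcard]
  have hq0 : (q : ℝ) ≠ 0 := by
    rw [← hq]
    exact_mod_cast Fintype.card_ne_zero
  have hbb : b * N = (b * (N - b) - invNumFin τ) + invNumFin τ + b ^ 2 := by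
    rw [Nat.sub_add_cancel hle, pow_two, ← mul_add, Nat.sub_add_cancel hbN]
  rw [hbb, pow_add, pow_add]
  push_cast
  field_simp
end

section
/- Fix b ∈ ℕ and a real number q > 1. Then the family (q^{−ℓ̃(w)}) indexed by all injective functions w : Fin b → ℕ is summable, with sum (1 − q^{−1})^{−b}. Equivalently, w ↦ (1 − q^{−1})^b · q^{−ℓ̃(w)} is a probability distribution on the set of flag juggling states with b balls. -/
/-- The inversion number of a flag juggling state `w : Fin b → ℕ` (the ball labeled
`i+1` sits at position `w i`, all other positions empty): pairs of labels out of order,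
plus pairs of an empty position and a ball to its right. -/
def flagInv {b : ℕ} (w : Fin b → ℕ) : ℕ :=
  ((Finset.univ : Finset (Fin b × Fin b)).filter
    fun p => p.2 < p.1 ∧ w p.1 < w p.2).card +
  ∑ i : Fin b, ((Finset.range (w i)).filter fun p => ∀ k, w k ≠ p).card

/-- The Lehmer-type code of a state at ball `j`. -/
def flagCode {b : ℕ} (w : Fin b → ℕ) (j : Fin b) : ℕ :=
  ((Finset.range (w j)).filter fun p => ∀ k, k < j → w k ≠ p).card

theorem flagInv_eq_sum {b : ℕ} (w : Fin b → ℕ) (hw : Function.Injective w) :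
    flagInv w = ∑ j, flagCode w j := by
  have h1 : ((Finset.univ : Finset (Fin b × Fin b)).filter
      fun p => p.2 < p.1 ∧ w p.1 < w p.2).card =
      ∑ j : Fin b, ((Finset.univ : Finset (Fin b)).filter
        fun i => j < i ∧ w i < w j).card := by
    simp only [Finset.card_filter]
    rw [Fintype.sum_prod_type_right]
  unfold flagInv
  rw [h1, ← Finset.sum_add_distrib]
  refine Finset.sum_congr rfl fun j _ => ?_
  rw [← Finset.card_image_of_injective _ hw, ← Finset.card_union_of_disjoint]
  · unfold flagCode
    congr 1
    ext p
    simp only [Finset.mem_union, Finset.mem_image, Finset.mem_filter, Finset.mem_univ,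
      true_and, Finset.mem_range]
    constructor
    · rintro (⟨i, ⟨h, h'⟩, rfl⟩ | ⟨h, h'⟩)
      · refine ⟨h', fun k hk e => ?_⟩
        have := hw e
        omega
      · exact ⟨h, fun k _ => h' k⟩
    · rintro ⟨h, h'⟩
      by_cases hp : ∃ k, w k = p
      · obtain ⟨k, rfl⟩ := hp
        left
        refine ⟨k, ⟨?_, h⟩, rfl⟩
        rcases lt_trichotomy k j with hk | hk | hk
        · exact absurd rfl (h' k hk)
        · subst hk; omega
        · exact hk
      · right
        exact ⟨h, fun k hk => hp ⟨k, hk⟩⟩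
  · rw [Finset.disjoint_left]
    intro p hp hp'
    obtain ⟨i, _, rfl⟩ := Finset.mem_image.1 hp
    exact (Finset.mem_filter.1 hp').2 i rfl

theorem flagInv_snoc {b : ℕ} (w : Fin b → ℕ) (hw : Function.Injective w) (m : ℕ)
    (hm : ∀ k, w k ≠ m) (h : Function.Injective (Fin.snoc w m : Fin (b + 1) → ℕ)) :
    flagInv (Fin.snoc w m : Fin (b + 1) → ℕ) =
      flagInv w + ((Finset.range m).filter fun p => ∀ k, w k ≠ p).card := by
  rw [flagInv_eq_sum _ hw, flagInv_eq_sum _ h, Fin.sum_univ_castSucc]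
  congr 1
  · refine Finset.sum_congr rfl fun j _ => ?_
    unfold flagCode
    simp [Fin.forall_fin_succ', Fin.snoc_castSucc, Fin.snoc_last, Fin.le_last, not_lt]
  · unfold flagCode
    simp [Fin.forall_fin_succ', Fin.snoc_castSucc, Fin.snoc_last, Fin.castSucc_lt_last]

theorem snoc_inj {b : ℕ} (w : Fin b → ℕ) (hw : Function.Injective w) (m : ℕ)
    (hm : ∀ k, w k ≠ m) : Function.Injective (Fin.snoc w m : Fin (b + 1) → ℕ) := by
  rw [Fin.snoc_injective_iff]
  exact ⟨hw, by rintro ⟨k, hk⟩; exact hm k hk⟩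

theorem free_infinite {b : ℕ} (w : Fin b → ℕ) : (Set.ofPred fun p => ∀ k, w k ≠ p).Infinite := by
  have : (Set.ofPred fun p => ∀ k, w k ≠ p) = (Set.range w)ᶜ := by
    ext p; simp [Set.mem_ofPred_eq]
  rw [this]
  exact (Set.finite_range w).infinite_compl

/-- Insert a new ball into the `n`-th empty position. -/
noncomputable def insertBall (b : ℕ) (x : {w : Fin b → ℕ // Function.Injective w} × ℕ) :
    {w : Fin (b + 1) → ℕ // Function.Injective w} :=
  ⟨Fin.snoc x.1.1 (Nat.nth (fun p => ∀ k, x.1.1 k ≠ p) x.2),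
    snoc_inj _ x.1.2 _ (Nat.nth_mem_of_infinite (free_infinite x.1.1) x.2)⟩

theorem insertBall_bij (b : ℕ) : Function.Bijective (insertBall b) := by
  constructor
  · rintro ⟨⟨w, hw⟩, n⟩ ⟨⟨w', hw'⟩, n'⟩ h
    have h := congrArg Subtype.val h
    simp only [insertBall] at h
    obtain ⟨h1, h2⟩ := Fin.snoc_injective2 h
    subst h1
    have := Nat.nth_injective (free_infinite w) h2
    subst this
    rfl
  · rintro ⟨w, hw⟩
    have hi : Function.Injective (Fin.init w) := fun i j h =>
      Fin.castSucc_injective b (hw h)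
    have hm : ∀ k, Fin.init w k ≠ w (Fin.last b) := fun k h =>
      (Fin.castSucc_lt_last k).ne (hw h)
    refine ⟨⟨⟨Fin.init w, hi⟩, Nat.count (fun p => ∀ k, Fin.init w k ≠ p) (w (Fin.last b))⟩, ?_⟩
    apply Subtype.ext
    simp only [insertBall]
    rw [Nat.nth_count (p := fun p => ∀ k, Fin.init w k ≠ p) hm, Fin.snoc_init_self]

theorem flagInv_insertBall (b : ℕ) (x : {w : Fin b → ℕ // Function.Injective w} × ℕ) :
    flagInv (insertBall b x).1 = flagInv x.1.1 + x.2 := by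
  unfold insertBall
  have hm := Nat.nth_mem_of_infinite (free_infinite x.1.1) x.2
  rw [flagInv_snoc _ x.1.2 _ hm (snoc_inj _ x.1.2 _ hm), ← Nat.count_eq_card_filter_range,
    Nat.count_nth_of_infinite (free_infinite x.1.1)]

theorem flag_hasSum (b : ℕ) (q : ℝ) (hq : 1 < q) :
    HasSum (fun w : {w : Fin b → ℕ // Function.Injective w} =>
        ((q ^ flagInv w.1)⁻¹ : ℝ)) ((1 - q⁻¹) ^ b)⁻¹ := by
  have q0 : 0 < q := by linarith
  induction b with
  | zero =>
    have : Unique {w : Fin 0 → ℕ // Function.Injective w} :=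
      ⟨⟨⟨Fin.elim0, fun i => i.elim0⟩⟩, fun a => Subtype.ext (Subsingleton.elim _ _)⟩
    convert hasSum_unique (fun w : {w : Fin 0 → ℕ // Function.Injective w} => ((q ^ flagInv w.1)⁻¹ : ℝ)) using 1
    simp [flagInv]
  | succ b ih =>
    rw [← (Equiv.ofBijective _ (insertBall_bij b)).hasSum_iff]
    have hg : HasSum (fun n : ℕ => (q⁻¹) ^ n) (1 - q⁻¹)⁻¹ :=
      hasSum_geometric_of_lt_one (by positivity) (inv_lt_one_of_one_lt₀ hq)
    have hs := ih.summable.mul_of_nonneg hg.summable (fun w => by positivity)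
      (fun n => by positivity)
    have hp := ih.mul hg hs
    rw [pow_succ, mul_inv]
    refine (congrArg (fun f => HasSum f _) (funext fun x => ?_)).mpr hp
    simp only [Function.comp, Equiv.ofBijective_apply, flagInv_insertBall]
    rw [pow_add, mul_inv, inv_pow]

theorem stmt13 (b : ℕ) (q : ℝ) (hq : 1 < q) :
    HasSum (fun w : {w : Fin b → ℕ // Function.Injective w} =>
        ((q ^ flagInv w.1)⁻¹ : ℝ)) ((1 - q⁻¹) ^ b)⁻¹ ∧
    HasSum (fun w : {w : Fin b → ℕ // Function.Injective w} =>
        ((1 - q⁻¹) ^ b * (q ^ flagInv w.1)⁻¹ : ℝ)) 1 := by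
  have h := flag_hasSum b q hq
  refine ⟨h, ?_⟩
  have h0 : (1 - q⁻¹) ^ b ≠ 0 :=
    pow_ne_zero _ (sub_pos.2 (inv_lt_one_of_one_lt₀ hq)).ne'
  have h2 := h.mul_left ((1 - q⁻¹) ^ b)
  rwa [mul_inv_cancel₀ h0] at h2
end

section
/- Fix b ≥ 1 and a real number q > 1, and define π(w) := (1 − q^{−1})^b · q^{−ℓ̃(w)} on flag juggling states with b balls. Consider the Markov chain on flag juggling states defined as follows, using a coin with heads-probability 1/q. From state w: hold the symbol ∞ and point at the occupied position with the largest value; then repeat: flip the coin; on tails, place the currently held symbol at the pointed position (the position becomes empty if the held symbol is ∞) and pick up the label that was there; on heads, do nothing; then move the pointer to the largest occupied position smaller than the current one whose label is smaller than the currently held symbol (where ∞ is larger than every label); if no such position exists, terminate: the new state is obtained by shifting every occupied position up by one and, if the held symbol is a label (not ∞), placing it at position 0. Then π is stationary for this chain: for every flag juggling state w', the sum over all flag juggling states w of π(w) times the probability that the chain started at w terminates at w' converges and equals π(w'). -/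
/-- During the walking process, the state is a partial placement `w : Fin b → Option ℕ`,
where `w k = some p` means the ball labeled `k+1` sits at position `p` and `w k = none`
means the ball labeled `k+1` is currently held (if no label is held, the held symbol
is `∞`).  `tailsSwap w k` performs a tails-flip at the position `w k`: the held symbol
is placed at that position (the position becomes empty if the held symbol is `∞`)
and the label `k+1` is picked up. -/
def tailsSwap {b : ℕ} (w : Fin b → Option ℕ) (k : Fin b) : Fin b → Option ℕ :=
  fun m => if m = k then none else if w m = none then w k else w m

/-- The final state of the process: every placed ball shifts up one position and the
held label (if any) is placed at position `0`. -/
def finalState {b : ℕ} (w : Fin b → Option ℕ) : Fin b → ℕ :=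
  fun m => match w m with
    | some p => p + 1
    | none => 0

/-- `walkProb q ptr w w'` is the probability that the walking process, currently in
partial placement `w` with the pointer about to scan positions `ptr - 1, ptr - 2, ..., 0`,
terminates at the flag juggling state `w'`.  A position `p` is a flip site when it is
occupied by a ball whose label is smaller than the held symbol (`∞`, i.e. no `k` with
`w k = none`, counts as larger than every label); there the coin is flipped:
heads (probability `q⁻¹`) does nothing, tails (probability `1 - q⁻¹`) places the held
symbol and picks up the ball. -/
noncomputable def walkProb (q : ℝ) {b : ℕ} : ℕ → (Fin b → Option ℕ) → (Fin b → ℕ) → ℝ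
  | 0, w, w' => if w' = finalState w then 1 else 0
  | p + 1, w, w' =>
    let ks := Finset.univ.filter fun k : Fin b => w k = some p ∧ ∀ j, w j = none → k < j
    if h : ks.Nonempty then
      q⁻¹ * walkProb q p w w' + (1 - q⁻¹) * walkProb q p (tailsSwap w (ks.max' h)) w'
    else
      walkProb q p w w'

/-- The transition probability of the backwards flag-juggling Markov chain: the process
starts at the fully placed state `w`, holding `∞` and pointing at the largest occupied
position; `transProb q w w'` is the probability that it terminates at `w'`. -/
noncomputable def transProb (q : ℝ) {b : ℕ} (w : Fin b → ℕ) (w' : Fin b → ℕ) : ℝ :=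
  walkProb q (Finset.univ.sup w + 1) (fun k => some (w k)) w'

section Helpers

open Finset

variable {b : ℕ}

/-- remove position `p`; the ball there (if any) becomes held -/
def remAt (p : ℕ) (w : Fin b → ℕ) : Fin b → Option ℕ :=
  fun k => if w k = p then none else if w k < p then some (w k) else some (w k - 1)

/-- swap the contents of positions `p` and `p+1` -/
def swp (p : ℕ) (w : Fin b → ℕ) : Fin b → ℕ :=
  fun k => if w k = p then p + 1 else if w k = p + 1 then p else w k

/-- a coin is flipped -/
def Asc (p : ℕ) (w : Fin b → ℕ) : Prop :=
  ∃ k, w k = p ∧ ∀ j, w j = p + 1 → k < j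

lemma swp_swp (p : ℕ) (w : Fin b → ℕ) : swp p (swp p w) = w := by
  funext k
  simp only [swp]
  split_ifs <;> omega

lemma swp_inj (p : ℕ) (w : Fin b → ℕ) (h : Function.Injective w) :
    Function.Injective (swp p w) := by
  intro i j hij
  apply h
  simp only [swp] at hij
  split_ifs at hij <;> omega

lemma rem_swp (p : ℕ) (w : Fin b → ℕ) : remAt p (swp p w) = remAt (p+1) w := by
  funext k
  simp only [swp, remAt]
  split_ifs <;> first | omega | rfl | (congr 1; omega)

lemma finalState_rem (w : Fin b → ℕ) : finalState (remAt 0 w) = w := by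
  funext k
  simp only [finalState, remAt]
  by_cases h : w k = 0
  · simp [h]
  · simp [h]; omega

lemma walk_flip (q : ℝ) (p : ℕ) (v : Fin b → Option ℕ) (w' : Fin b → ℕ) (k : Fin b)
    (hk : v k = some p) (hu : ∀ j, v j = some p → j = k) (hh : ∀ j, v j = none → k < j) :
    walkProb q (p+1) v w' =
      q⁻¹ * walkProb q p v w' + (1 - q⁻¹) * walkProb q p (tailsSwap v k) w' := by
  have hks : (Finset.univ.filter fun k : Fin b => v k = some p ∧ ∀ j, v j = none → k < j)
      = {k} := by
    ext j
    simp only [mem_filter, mem_univ, true_and, mem_singleton]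
    constructor
    · exact fun h => hu j h.1
    · rintro rfl; exact ⟨hk, hh⟩
  rw [walkProb]
  simp only [hks]
  simp

lemma walk_noflip (q : ℝ) (p : ℕ) (v : Fin b → Option ℕ) (w' : Fin b → ℕ)
    (h : ¬ ∃ k, v k = some p ∧ ∀ j, v j = none → k < j) :
    walkProb q (p+1) v w' = walkProb q p v w' := by
  rw [walkProb]
  have : ¬ (Finset.univ.filter fun k : Fin b =>
      v k = some p ∧ ∀ j, v j = none → k < j).Nonempty := by
    rintro ⟨k, hk⟩
    exact h ⟨k, by simpa using hk⟩
  simp only [this, dite_false]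

lemma rem_eq_some (p : ℕ) (w : Fin b → ℕ) (k : Fin b) :
    remAt (p+1) w k = some p ↔ w k = p := by
  simp only [remAt]
  split_ifs <;> simp <;> omega

lemma rem_eq_none (p : ℕ) (w : Fin b → ℕ) (k : Fin b) :
    remAt p w k = none ↔ w k = p := by
  simp only [remAt]
  split_ifs <;> simp <;> omega

lemma step_asc (q : ℝ) (p : ℕ) (w w' : Fin b → ℕ) (hw : Function.Injective w) (h : Asc p w) :
    walkProb q (p+1) (remAt (p+1) w) w' =
      q⁻¹ * walkProb q p (remAt p (swp p w)) w' + (1 - q⁻¹) * walkProb q p (remAt p w) w' := by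
  obtain ⟨k, hk, hj⟩ := h
  have e : tailsSwap (remAt (p+1) w) k = remAt p w := by
    funext m
    have : m = k ↔ w m = p := ⟨fun h => h ▸ hk, fun h => hw (h.trans hk.symm)⟩
    simp only [tailsSwap, rem_eq_none, this]
    simp only [remAt, hk]
    split_ifs <;> first | omega | rfl | (simp; try omega)
  rw [walk_flip q p _ w' k, rem_swp, e]
  · simp [rem_eq_some, hk]
  · intro j hj; apply hw; simp [rem_eq_some] at hj; omega
  · intro j h; exact hj j ((rem_eq_none _ _ _).1 h)

lemma step_not (q : ℝ) (p : ℕ) (w w' : Fin b → ℕ) (h : ¬ Asc p w) :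
    walkProb q (p+1) (remAt (p+1) w) w' = walkProb q p (remAt p (swp p w)) w' := by
  rw [walk_noflip, rem_swp]
  rintro ⟨k, h1, h2⟩
  exact h ⟨k, by simpa [rem_eq_some] using h1, fun j hj => h2 j ((rem_eq_none _ _ _).2 hj)⟩

lemma inv_swp (p : ℕ) (w : Fin b → ℕ) (hw : Function.Injective w) (h : Asc p w) :
    flagInv (swp p w) = flagInv w + 1 := by
  obtain ⟨x, hx, hj⟩ := h
  have hux : ∀ m, w m = p → m = x := fun m h => hw (h.trans hx.symm)
  -- generic count
  have cnt : ∀ i, ((∃ y, w y = p + 1) ∨ i ≠ x) →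
      ((Finset.range (swp p w i)).filter fun r => ∀ k, swp p w k ≠ r).card =
      ((Finset.range (w i)).filter fun r => ∀ k, w k ≠ r).card := by
    intro i hi
    apply Finset.card_nbij' (fun r => if r = p then p + 1 else if r = p + 1 then p else r)
      (fun r => if r = p then p + 1 else if r = p + 1 then p else r)
    · intro r hr
      simp only [coe_filter, mem_range, Set.mem_ofPred_eq] at hr ⊢
      obtain ⟨h1, h2⟩ := hr
      refine ⟨?_, fun k hk => h2 k ?_⟩
      · have hxr := h2 x
        have hir := h2 i
        have hi' : (∃ y, w y = p + 1) ∨ w i ≠ p := hi.imp id (fun h h' => h (hux i h'))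
        rcases hi' with ⟨y, hy⟩ | hi'
        · have hyr := h2 y
          simp only [swp] at *
          split_ifs at * <;> omega
        · simp only [swp] at *
          split_ifs at * <;> omega
      · simp only [swp]
        split_ifs at * <;> omega
    · intro r hr
      simp only [coe_filter, mem_range, Set.mem_ofPred_eq] at hr ⊢
      obtain ⟨h1, h2⟩ := hr
      refine ⟨?_, fun k hk => h2 k ?_⟩
      · have hxr := h2 x
        have hir := h2 i
        have hi' : (∃ y, w y = p + 1) ∨ w i ≠ p := hi.imp id (fun h h' => h (hux i h'))
        rcases hi' with ⟨y, hy⟩ | hi'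
        · have hyr := h2 y
          simp only [swp] at *
          split_ifs at * <;> omega
        · simp only [swp] at *
          split_ifs at * <;> omega
      · simp only [swp] at hk
        split_ifs at * <;> omega
    · intro r _; dsimp only; split_ifs <;> omega
    · intro r _; dsimp only; split_ifs <;> omega
  unfold flagInv
  by_cases hy : ∃ y, w y = p + 1
  · rw [Finset.sum_congr rfl (fun i _ => cnt i (Or.inl hy))]
    obtain ⟨y, hy⟩ := hy
    have huy : ∀ m, w m = p + 1 → m = y := fun m h => hw (h.trans hy.symm)
    have hxy := hj y hy
    have : ((Finset.univ : Finset (Fin b × Fin b)).filter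
        fun r => r.2 < r.1 ∧ swp p w r.1 < swp p w r.2) =
        insert (y, x) ((Finset.univ : Finset (Fin b × Fin b)).filter
        fun r => r.2 < r.1 ∧ w r.1 < w r.2) := by
      ext ⟨i, j⟩
      simp only [mem_filter, mem_univ, true_and, mem_insert, Prod.mk.injEq]
      have h1 : i = x ↔ w i = p := ⟨fun h => h ▸ hx, hux i⟩
      have h2 : j = x ↔ w j = p := ⟨fun h => h ▸ hx, hux j⟩
      have h3 : i = y ↔ w i = p + 1 := ⟨fun h => h ▸ hy, huy i⟩
      have h4 : j = y ↔ w j = p + 1 := ⟨fun h => h ▸ hy, huy j⟩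
      have h5 : w i = p → w j = p + 1 → i < j := fun a c => by
        rw [hux i a, huy j c]; exact hxy
      have h6 : w i = p + 1 → w j = p → j < i := fun a c => by
        rw [huy i a, hux j c]; exact hxy
      rw [h3, h2]
      simp only [swp]
      split_ifs <;> omega
    rw [this, card_insert_of_notMem]
    · omega
    · simp [hx, hy]
  · have hy' : ∀ j, w j ≠ p + 1 := fun j hj => hy ⟨j, hj⟩
    have : ((Finset.univ : Finset (Fin b × Fin b)).filter
        fun r => r.2 < r.1 ∧ swp p w r.1 < swp p w r.2) =
        ((Finset.univ : Finset (Fin b × Fin b)).filter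
        fun r => r.2 < r.1 ∧ w r.1 < w r.2) := by
      ext ⟨i, j⟩
      simp only [mem_filter, mem_univ, true_and]
      have h1 := hy' i
      have h2 := hy' j
      simp only [swp]
      split_ifs <;> omega
    rw [this, add_assoc]
    congr 1
    rw [← Finset.add_sum_erase _ _ (mem_univ x),
      ← Finset.add_sum_erase (a := x) (f := fun i => (filter (fun p => ∀ k, w k ≠ p) (range (w i))).card)
        _ (mem_univ x),
      Finset.sum_congr rfl (fun i hi => cnt i (Or.inr (ne_of_mem_erase hi)))]
    have : ((Finset.range (swp p w x)).filter fun r => ∀ k, swp p w k ≠ r) =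
        insert p ((Finset.range (w x)).filter fun r => ∀ k, w k ≠ r) := by
      have hsx : swp p w x = p + 1 := by simp [swp, hx]
      rw [hsx, hx]
      ext r
      simp only [mem_filter, mem_range, mem_insert]
      constructor
      · rintro ⟨h1, h2⟩
        by_cases hr : r = p
        · exact Or.inl hr
        · refine Or.inr ⟨by omega, fun k hk => h2 k ?_⟩
          simp only [swp]
          split_ifs <;> omega
      · rintro (rfl | ⟨h1, h2⟩)
        · refine ⟨by omega, fun k => ?_⟩
          have := hy' k
          simp only [swp]
          split_ifs <;> omega
        · refine ⟨by omega, fun k => ?_⟩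
          have := h2 k
          simp only [swp]
          split_ifs <;> omega
    rw [this, card_insert_of_notMem]
    · omega
    · simp [hx]

lemma tri (p : ℕ) (w : Fin b → ℕ) : Asc p w ∨ Asc p (swp p w) ∨ swp p w = w := by
  by_cases h1 : ∃ x, w x = p
  · by_cases h2 : ∃ y, w y = p + 1
    · by_contra! hc
      obtain ⟨h3, h4, -⟩ := hc
      obtain ⟨x, hx⟩ := h1
      obtain ⟨y, hy⟩ := h2
      simp only [Asc, not_exists, not_and, not_forall, not_lt] at h3 h4
      -- minimal elements
      obtain ⟨x, hx, hxm⟩ := WellFounded.has_min (r := ((· < ·) : Fin b → Fin b → Prop))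
        wellFounded_lt {k | w k = p} ⟨x, hx⟩
      obtain ⟨y, hy, hym⟩ := WellFounded.has_min (r := ((· < ·) : Fin b → Fin b → Prop))
        wellFounded_lt {k | w k = p + 1} ⟨y, hy⟩
      simp only [Set.mem_ofPred_eq] at hx hy hxm hym
      obtain ⟨j, hj, hj'⟩ := h3 x hx
      obtain ⟨i, hi, hi'⟩ := h4 y (by simp [swp, hy])
      have hi2 : w i = p := by
        simp only [swp] at hi
        split_ifs at hi <;> omega
      have := hym j hj
      have := hxm i hi2
      have hxy : x = y := by omega
      rw [hxy] at hx
      omega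
    · obtain ⟨x, hx⟩ := h1
      exact Or.inl ⟨x, hx, fun j hj => absurd ⟨j, hj⟩ h2⟩
  · by_cases h2 : ∃ y, w y = p + 1
    · obtain ⟨y, hy⟩ := h2
      refine Or.inr (Or.inl ⟨y, by simp [swp, hy], fun j hj => absurd ⟨j, ?_⟩ h1⟩)
      simp only [swp] at hj
      split_ifs at hj <;> omega
    · refine Or.inr (Or.inr ?_)
      funext k
      have a : w k ≠ p := fun h => h1 ⟨k, h⟩
      have c : w k ≠ p + 1 := fun h => h2 ⟨k, h⟩
      simp [swp, a, c]

lemma asc_swp (p : ℕ) (w : Fin b → ℕ) (h : Asc p w) : ¬ Asc p (swp p w) := by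
  obtain ⟨k, hk, hj⟩ := h
  rintro ⟨i, hi, hi'⟩
  have h1 : w i = p + 1 := by
    simp only [swp] at hi
    split_ifs at hi <;> omega
  have := hj i h1
  have := hi' k (by simp [swp, hk])
  omega

/-- injective words with positions below `N` -/
noncomputable def injBox (b N : ℕ) : Finset (Fin b → ℕ) := by
  classical
  exact (Fintype.piFinset fun _ => range N).filter Function.Injective

lemma mem_box (N : ℕ) (w : Fin b → ℕ) :
    w ∈ injBox b N ↔ (∀ k, w k < N) ∧ Function.Injective w := by
  simp [injBox]

lemma swp_box (p N : ℕ) (hp : p < N) (w : Fin b → ℕ) (h : w ∈ injBox b (N+1)) :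
    swp p w ∈ injBox b (N+1) := by
  rw [mem_box] at *
  refine ⟨fun k => ?_, swp_inj p w h.2⟩
  have := h.1 k
  simp only [swp]
  split_ifs <;> omega

lemma sum_swp (p N : ℕ) (hp : p < N) (X : (Fin b → ℕ) → ℝ) :
    ∑ w ∈ injBox b (N+1), X (swp p w) = ∑ w ∈ injBox b (N+1), X w :=
  Finset.sum_nbij' (swp p) (swp p) (fun w h => swp_box p N hp w h)
    (fun w h => swp_box p N hp w h) (fun w _ => swp_swp p w) (fun w _ => swp_swp p w)
    (fun _ _ => rfl)

lemma sum_step (q : ℝ) (hq : 1 < q) (p N : ℕ) (hp : p < N) (w' : Fin b → ℕ) :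
    ∑ w ∈ injBox b (N+1), (q ^ flagInv w)⁻¹ * walkProb q (p+1) (remAt (p+1) w) w' =
    ∑ w ∈ injBox b (N+1), (q ^ flagInv w)⁻¹ * walkProb q p (remAt p w) w' := by
  set X : (Fin b → ℕ) → ℝ :=
    fun w => (q ^ flagInv w)⁻¹ * walkProb q (p+1) (remAt (p+1) w) w' with hX
  set Y : (Fin b → ℕ) → ℝ :=
    fun w => (q ^ flagInv w)⁻¹ * walkProb q p (remAt p w) w' with hY
  have key : ∀ w, Function.Injective w → Asc p w →
      X w + X (swp p w) = Y w + Y (swp p w) := by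
    intro w hw ha
    simp only [hX, hY]
    rw [step_asc q p w w' hw ha, step_not q p (swp p w) w' (asc_swp p w ha), swp_swp,
      inv_swp p w hw ha, pow_succ, mul_inv]
    ring
  have h2 : ∑ w ∈ injBox b (N+1), (X w + X (swp p w)) = ∑ w ∈ injBox b (N+1), (Y w + Y (swp p w)) := by
    apply Finset.sum_congr rfl
    intro w hw
    have hwi := ((mem_box _ _).1 hw).2
    rcases tri p w with h | h | h
    · exact key w hwi h
    · have := key (swp p w) (swp_inj p w hwi) h
      rw [swp_swp] at this
      linarith
    · have hn : ¬ Asc p w := fun ha => by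
        have := asc_swp p w ha
        rw [h] at this
        exact this ha
      have : X w = Y w := by
        simp only [hX, hY]
        rw [step_not q p w w' hn, h]
      rw [h, this]
  rw [sum_add_distrib, sum_add_distrib, sum_swp p N hp, sum_swp p N hp] at h2
  linarith

lemma sum_all (q : ℝ) (hq : 1 < q) (N : ℕ) (w' : Fin b → ℕ) (hw' : w' ∈ injBox b (N+1)) :
    ∑ w ∈ injBox b (N+1), (q ^ flagInv w)⁻¹ * walkProb q N (remAt N w) w' = (q ^ flagInv w')⁻¹ := by
  have : ∀ p ≤ N, ∑ w ∈ injBox b (N+1), (q ^ flagInv w)⁻¹ * walkProb q p (remAt p w) w' =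
      (q ^ flagInv w')⁻¹ := by
    intro p
    induction p with
    | zero =>
      intro _
      simp only [walkProb, finalState_rem]
      simp [hw']
    | succ p ih =>
      intro hp
      rw [sum_step q hq p N hp, ih (by omega)]
  exact this N le_rfl

lemma walk_bds (q : ℝ) (hq : 1 < q) (w' : Fin b → ℕ) (p : ℕ) :
    ∀ v : Fin b → Option ℕ, 0 ≤ walkProb q p v w' ∧ walkProb q p v w' ≤ 1 := by
  have h0 : 0 < q⁻¹ := by positivity
  have h1 : q⁻¹ < 1 := inv_lt_one_of_one_lt₀ hq
  induction p with
  | zero => intro v; rw [walkProb]; split_ifs <;> simp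
  | succ p ih =>
    intro v
    rw [walkProb]
    split_ifs with h
    · obtain ⟨a1, a2⟩ := ih v
      obtain ⟨c1, c2⟩ := ih (tailsSwap v (Finset.max' _ h))
      constructor
      · have := sub_pos.2 h1
        positivity
      · nlinarith
    · exact ih v

lemma walk_held (q : ℝ) (w' : Fin b → ℕ) (p : ℕ) :
    ∀ v : Fin b → Option ℕ, (∃ m, v m = none) → walkProb q p v w' ≠ 0 →
      ∀ k r, v k = some r → ∃ k', w' k' = r + 1 := by
  induction p with
  | zero =>
    intro v _ h k r hk
    rw [walkProb] at h
    split_ifs at h with h'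
    · exact ⟨k, by rw [h']; simp [finalState, hk]⟩
    · exact absurd rfl h
  | succ p ih =>
    intro v hm h k r hk
    rw [walkProb] at h
    split_ifs at h with hne
    · by_cases h1 : walkProb q p v w' = 0
      · have h2 : walkProb q p (tailsSwap v (Finset.max' _ hne)) w' ≠ 0 := by
          intro h2
          rw [h1, h2] at h
          simp at h
        set x := Finset.max' _ hne with hx
        by_cases hkx : k = x
        · obtain ⟨m, hm⟩ := hm
          refine ih _ ⟨x, by simp [tailsSwap]⟩ h2 m r ?_
          have : m ≠ x := by
            rintro rfl
            rw [hkx, hm] at hk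
            cases hk
          rw [hkx] at hk
          simp [tailsSwap, this, hm, hk]
        · exact ih _ ⟨x, by simp [tailsSwap]⟩ h2 k r (by simp [tailsSwap, hkx, hk])
      · exact ih v hm h1 k r hk
    · exact ih v hm h k r hk

lemma walk_trans (q : ℝ) (w w' : Fin b → ℕ) (N : ℕ) (h : Finset.univ.sup w + 1 ≤ N) :
    walkProb q N (fun k => some (w k)) w' = transProb q w w' := by
  induction N, h using Nat.le_induction with
  | base => rfl
  | succ n hn ih =>
    rw [walk_noflip, ih]
    rintro ⟨k, hk, -⟩
    have : w k ≤ Finset.univ.sup w := Finset.le_sup (mem_univ k)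
    simp only [Option.some.injEq] at hk
    omega

lemma inv_ge (w : Fin b → ℕ) (N : ℕ) (i : Fin b) (hi : w i = N) : N - b ≤ flagInv w := by
  have h1 : ((Finset.range (w i)).filter fun p => ∀ k, w k ≠ p).card ≤ flagInv w := by
    unfold flagInv
    refine le_trans ?_ (Nat.le_add_left _ _)
    exact Finset.single_le_sum
      (f := fun i => ((Finset.range (w i)).filter fun p => ∀ k, w k ≠ p).card)
      (fun _ _ => Nat.zero_le _) (mem_univ i)
  refine le_trans ?_ h1
  have h2 : range N \ univ.image w ⊆ (Finset.range (w i)).filter fun p => ∀ k, w k ≠ p := by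
    intro r hr
    simpa [hi] using hr
  refine le_trans ?_ (card_le_card h2)
  refine le_trans ?_ (le_card_sdiff _ _)
  have : (univ.image w).card ≤ b := by simpa using card_image_le (s := univ) (f := w)
  rw [card_range]
  omega

lemma sum_split (q : ℝ) (hq : 1 < q) (hb : 1 ≤ b) (M N : ℕ) (hN : M ≤ N) (w' : Fin b → ℕ)
    (hw' : Function.Injective w') (hM : ∀ k, w' k ≤ M) :
    ∃ R : ℝ, 0 ≤ R ∧ R ≤ ((M:ℝ) + 1) ^ b * (q ^ (N - b))⁻¹ ∧
    ∑ w ∈ injBox b N, (q ^ flagInv w)⁻¹ * transProb q w w' + R = (q ^ flagInv w')⁻¹ := by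
  classical
  have hq0 : 0 < q := by linarith
  have hall := sum_all q hq N w' ((mem_box _ _).2 ⟨fun k => by have := hM k; omega, hw'⟩)
  set Z : (Fin b → ℕ) → ℝ := fun w => (q ^ flagInv w)⁻¹ * walkProb q N (remAt N w) w' with hZ
  have hZ0 : ∀ w, 0 ≤ Z w := fun w =>
    mul_nonneg (by positivity) (walk_bds q hq w' N _).1
  rw [← Finset.sum_filter_add_sum_filter_not _ (fun w => ∀ k, w k ≠ N)] at hall
  refine ⟨∑ w ∈ (injBox b (N+1)).filter (fun w => ¬ ∀ k, w k ≠ N), Z w, ?_, ?_, ?_⟩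
  rotate_left 2
  · rw [← hall]
    congr 1
    have : (injBox b (N+1)).filter (fun w => ∀ k, w k ≠ N) = injBox b N := by
      ext w
      simp only [mem_filter, mem_box]
      constructor
      · rintro ⟨⟨h1, h2⟩, h3⟩
        exact ⟨fun k => by have := h1 k; have := h3 k; omega, h2⟩
      · rintro ⟨h1, h2⟩
        exact ⟨⟨fun k => by have := h1 k; omega, h2⟩, fun k => (h1 k).ne⟩
    rw [this]
    apply Finset.sum_congr rfl
    intro w hw
    have hlt := ((mem_box _ _).1 hw).1
    have hr : remAt N w = fun k => some (w k) := by
      funext k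
      simp [remAt, hlt k, (hlt k).ne]
    rw [hr, walk_trans]
    have : N ≠ 0 := by have := hlt ⟨0, hb⟩; omega
    have : Finset.univ.sup w < N := by
      rw [Finset.sup_lt_iff (by simp; omega)]
      exact fun k _ => hlt k
    omega
  · exact Finset.sum_nonneg fun w _ => hZ0 w
  · set T := (injBox b (N+1)).filter (fun w => ¬ ∀ k, w k ≠ N)
    set U : Finset (Fin b → ℕ) := Fintype.piFinset fun _ => insert N (range M) with hU
    have hUc : (U.card : ℝ) ≤ ((M:ℝ)+1) ^ b := by
      have : U.card ≤ (M+1) ^ b := by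
        rw [hU, Fintype.card_piFinset]
        simp only [prod_const, card_univ, Fintype.card_fin]
        gcongr
        simpa using card_insert_le N (range M)
      exact_mod_cast this
    calc ∑ w ∈ T, Z w = ∑ w ∈ T.filter (· ∈ U), Z w := by
          symm
          apply Finset.sum_filter_of_ne
          intro w hw hz
          simp only [T, mem_filter, mem_box, not_forall, not_not] at hw
          obtain ⟨⟨h1, h2⟩, m, hm⟩ := hw
          have hwk := right_ne_zero_of_mul hz
          have := walk_held q w' N _ ⟨m, (rem_eq_none _ _ _).2 hm⟩ hwk
          rw [hU, Fintype.mem_piFinset]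
          intro k
          simp only [mem_insert, mem_range]
          by_cases hk : w k = N
          · exact Or.inl hk
          · right
            have hlt : w k < N := by have := h1 k; omega
            obtain ⟨k', hk'⟩ := this k (w k) (by simp [remAt, hk, hlt])
            have := hM k'
            omega
      _ ≤ ∑ w ∈ T.filter (· ∈ U), (q ^ (N - b))⁻¹ := by
          apply Finset.sum_le_sum
          intro w hw
          simp only [T, mem_filter, mem_box, not_forall, not_not] at hw
          obtain ⟨⟨_, m, hm⟩, _⟩ := hw
          have h1 := (walk_bds q hq w' N (remAt N w)).2
          have h2 : (q ^ flagInv w)⁻¹ ≤ (q ^ (N - b))⁻¹ :=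
            inv_anti₀ (by positivity) (pow_le_pow_right₀ hq.le (inv_ge w N m hm))
          refine le_trans ?_ h2
          exact mul_le_of_le_one_right (by positivity) h1
      _ = (T.filter (· ∈ U)).card * (q ^ (N - b))⁻¹ := by simp
      _ ≤ U.card * (q ^ (N - b))⁻¹ := by
          gcongr
          intro w hw
          exact (mem_filter.1 hw).2
      _ ≤ _ := by gcongr

lemma main_hasSum (hb : 1 ≤ b) (q : ℝ) (hq : 1 < q)
    (w' : Fin b → ℕ) (hw' : Function.Injective w') :
    HasSum (fun w : {w : Fin b → ℕ // Function.Injective w} =>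
        (q ^ flagInv w.1)⁻¹ * transProb q w.1 w') ((q ^ flagInv w')⁻¹) := by
  classical
  have hq0 : 0 < q := by linarith
  set f : {w : Fin b → ℕ // Function.Injective w} → ℝ :=
    fun w => (q ^ flagInv w.1)⁻¹ * transProb q w.1 w' with hf
  have hf0 : ∀ w, 0 ≤ f w := fun w => mul_nonneg (by positivity) (walk_bds q hq w' _ _).1
  set M := Finset.univ.sup w' with hMdef
  have hM : ∀ k, w' k ≤ M := fun k => Finset.le_sup (mem_univ k)
  let T : ℕ → Finset {w : Fin b → ℕ // Function.Injective w} :=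
    fun N => (injBox b N).subtype Function.Injective
  have hTmem : ∀ N w, w ∈ T N ↔ ∀ k, w.1 k < N := by
    intro N w
    simp [T, mem_box, w.2]
  have hT : ∀ N, ∑ w ∈ T N, f w = ∑ w ∈ injBox b N, (q ^ flagInv w)⁻¹ * transProb q w w' := by
    intro N
    exact Finset.sum_subtype_of_mem (p := Function.Injective)
      (fun w => (q ^ flagInv w)⁻¹ * transProb q w w') (fun w hw => ((mem_box _ _).1 hw).2)
  have hmono : Monotone T := by
    intro A B hAB w hw
    rw [hTmem] at *
    exact fun k => (hw k).trans_le hAB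
  have hTt : Filter.Tendsto T Filter.atTop Filter.atTop := by
    apply Filter.tendsto_atTop_finset_of_monotone hmono
    intro w
    refine ⟨Finset.univ.sup w.1 + 1, (hTmem _ _).2 fun k => ?_⟩
    exact Nat.lt_succ_of_le (Finset.le_sup (mem_univ k))
  have hsum : Summable f := by
    apply summable_of_sum_le hf0 (c := (q ^ flagInv w')⁻¹)
    intro s
    obtain ⟨N, hN1, hN2⟩ :=
      ((hTt.eventually (Filter.eventually_ge_atTop s)).and (Filter.eventually_ge_atTop M)).exists
    obtain ⟨R, hR, _, he⟩ := sum_split q hq hb M N hN2 w' hw' hM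
    have : ∑ w ∈ s, f w ≤ ∑ w ∈ T N, f w :=
      Finset.sum_le_sum_of_subset_of_nonneg hN1 (fun w _ _ => hf0 w)
    rw [hT] at this
    linarith
  have hl1 := hsum.hasSum.comp hTt
  have hl2 : Filter.Tendsto (fun N => ∑ w ∈ T N, f w) Filter.atTop
      (nhds ((q ^ flagInv w')⁻¹)) := by
    have hz : Filter.Tendsto (fun N : ℕ => (q ^ flagInv w')⁻¹ -
        ((M:ℝ) + 1) ^ b * (q ^ (N - b))⁻¹) Filter.atTop (nhds ((q ^ flagInv w')⁻¹)) := by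
      have h1 : Filter.Tendsto (fun n : ℕ => (q ^ n)⁻¹) Filter.atTop (nhds 0) :=
        (tendsto_pow_atTop_atTop_of_one_lt hq).inv_tendsto_atTop
      have h2 := h1.comp (Filter.tendsto_sub_atTop_nat b)
      have h3 := (h2.const_mul (((M:ℝ) + 1) ^ b)).const_sub ((q ^ flagInv w')⁻¹)
      simpa using h3
    refine tendsto_of_tendsto_of_tendsto_of_le_of_le' hz tendsto_const_nhds ?_ ?_
    · filter_upwards [Filter.eventually_ge_atTop M] with N hN
      obtain ⟨R, hR, hR', he⟩ := sum_split q hq hb M N hN w' hw' hM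
      rw [hT]
      linarith
    · filter_upwards [Filter.eventually_ge_atTop M] with N hN
      obtain ⟨R, hR, hR', he⟩ := sum_split q hq hb M N hN w' hw' hM
      rw [hT]
      linarith
  have := tendsto_nhds_unique hl1 hl2
  rw [← this]
  exact hsum.hasSum

end Helpers

theorem stmt14 (b : ℕ) (hb : 1 ≤ b) (q : ℝ) (hq : 1 < q)
    (w' : Fin b → ℕ) (hw' : Function.Injective w') :
    HasSum (fun w : {w : Fin b → ℕ // Function.Injective w} =>
        ((1 - q⁻¹) ^ b * (q ^ flagInv w.1)⁻¹) * transProb q w.1 w')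
      ((1 - q⁻¹) ^ b * (q ^ flagInv w')⁻¹) := by
  simp only [mul_assoc]
  exact (main_hasSum hb q hq w' hw').mul_left _
end

section
/- Fix natural numbers b ≤ n. For b-element subsets σ, τ of {0,...,n−1}, say there is a directed edge σ → τ if σ ⊆ {0} ∪ {t+1 : t ∈ τ} (this is the juggling digraph with b balls and all throws of height at most n). For a b-element subset σ of {0,...,n−1}, define r(σ) := {n−1−i : i ∈ {0,...,n−1} \ σ}, an (n−b)-element subset of {0,...,n−1}. Then for all b-element subsets σ, τ of {0,...,n−1}: σ → τ in the (b,n) digraph if and only if r(τ) → r(σ) in the (n−b,n) digraph. Hence r is an isomorphism from the (b,n) juggling digraph with arrows reversed to the (n−b,n) juggling digraph. -/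
/-- The edge relation of the juggling digraph: `σ → τ` iff `σ ⊆ {0} ∪ {t+1 : t ∈ τ}`,
i.e. the state `τ` can follow `σ` after one throw. -/
def jugglingEdge (σ τ : Finset ℕ) : Prop := σ ⊆ insert 0 (τ.image (· + 1))

/-- The reversal-complement of a state: `r(σ) = {n-1-i : i ∈ {0,...,n-1} \ σ}`. -/
def rcState (n : ℕ) (σ : Finset ℕ) : Finset ℕ :=
  (Finset.range n \ σ).image fun i => n - 1 - i

theorem mem_rcState_iff (n : ℕ) (σ : Finset ℕ) (x : ℕ) :
    x ∈ rcState n σ ↔ x < n ∧ n - 1 - x ∉ σ := by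
  simp only [rcState, Finset.mem_image, Finset.mem_sdiff, Finset.mem_range]
  constructor
  · rintro ⟨i, ⟨hi, his⟩, rfl⟩
    refine ⟨by omega, ?_⟩
    rwa [show n - 1 - (n - 1 - i) = i by omega]
  · rintro ⟨hx, hs⟩
    exact ⟨n - 1 - x, ⟨by omega, hs⟩, by omega⟩

theorem jugglingEdge_iff (σ τ : Finset ℕ) :
    jugglingEdge σ τ ↔ ∀ t, t + 1 ∈ σ → t ∈ τ := by
  simp only [jugglingEdge, Finset.subset_iff, Finset.mem_insert, Finset.mem_image]
  constructor
  · intro h t ht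
    rcases h ht with h0 | ⟨a, ha, hat⟩
    · omega
    · rwa [show t = a by omega]
  · intro h x hx
    rcases x with _ | t
    · exact Or.inl rfl
    · exact Or.inr ⟨t, h t hx, rfl⟩

theorem stmt18 (b n : ℕ) (hbn : b ≤ n) (σ τ : Finset ℕ)
    (hσ : σ ⊆ Finset.range n) (hσc : σ.card = b)
    (hτ : τ ⊆ Finset.range n) (hτc : τ.card = b) :
    ((rcState n σ).card = n - b ∧ rcState n σ ⊆ Finset.range n) ∧
    (jugglingEdge σ τ ↔ jugglingEdge (rcState n τ) (rcState n σ)) := by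
  refine ⟨⟨?_, ?_⟩, ?_⟩
  · unfold rcState
    rw [Finset.card_image_of_injOn, Finset.card_sdiff_of_subset hσ, Finset.card_range, hσc]
    intro i hi j hj hij
    simp only [Finset.coe_sdiff, Set.mem_diff, Finset.mem_coe, Finset.mem_range] at hi hj
    simp only at hij
    omega
  · intro x hx
    exact Finset.mem_range.2 ((mem_rcState_iff n σ x).1 hx).1
  · simp only [jugglingEdge_iff, mem_rcState_iff]
    constructor
    · rintro h t ⟨ht, hs⟩
      refine ⟨by omega, fun hm => hs (h _ ?_)⟩
      rwa [show n - 1 - (t + 1) + 1 = n - 1 - t by omega]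
    · intro h t ht
      by_contra hc
      have hlt := Finset.mem_range.1 (hσ ht)
      have h2 := (h (n - 1 - (t + 1)) ⟨by omega, ?_⟩).2
      · rw [show n - 1 - (n - 1 - (t + 1)) = t + 1 by omega] at h2
        exact h2 ht
      · rwa [show n - 1 - (n - 1 - (t + 1) + 1) = t by omega]
end
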